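/- Let C ⊆ ℤ² be finite, D = ⋃_{c ∈ C} cell(c), and S, T ⊆ C with |S| = |T| = n. Consider n unlabeled unit squares, where a configuration assigns each square a position x ∈ ℝ² such that the closed cells cell(x) of distinct squares have pairwise disjoint interiors and cell(x) ⊆ D for every square; a move changes the position of a single square along a continuous path γ : [0,1] → ℝ² such that at every time cell(γ(u)) ⊆ D and the interior of cell(γ(u)) is disjoint from the cell of every other square; a valid movement schedule is a finite sequence of moves. Then there exists a valid movement schedule transforming the configuration with squares at the points of S into a configuration whose set of positions is exactly T if and only if for every connected component K of the grid graph on C, |S ∩ K| = |T ∩ K|. -/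

import Mathlib

/-- The closed axis-aligned unit square with bottom-left corner `x`. -/
def cell (x : ℝ × ℝ) : Set (ℝ × ℝ) := Set.Icc x.1 (x.1 + 1) ×ˢ Set.Icc x.2 (x.2 + 1)

/-- The canonical embedding of an integer grid point into the plane. -/
def toR2 (p : ℤ × ℤ) : ℝ × ℝ := ((p.1 : ℝ), (p.2 : ℝ))

/-- Reachability in the grid graph on the vertex set `C ⊆ ℤ²` (edges join points of `C`
at L¹-distance exactly 1); `gridReach C p q` says `p` and `q` lie in the same connected
component of this graph. -/
def gridReach (C : Set (ℤ × ℤ)) : ℤ × ℤ → ℤ × ℤ → Prop :=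
  Relation.ReflTransGen (fun a b => a ∈ C ∧ b ∈ C ∧ |a.1 - b.1| + |a.2 - b.2| = 1)

/-- A single valid move inside the domain `D` for `n` unit squares: one square `i`
translates along a continuous path `γ`, all other squares stay put, and at every time the
moving square's cell stays inside `D` and its interior is disjoint from every other
square's cell. -/
def Move (n : ℕ) (D : Set (ℝ × ℝ)) (c c' : Fin n → ℝ × ℝ) : Prop :=
  ∃ i : Fin n, (∀ j : Fin n, j ≠ i → c' j = c j) ∧
    ∃ γ : ℝ → ℝ × ℝ, ContinuousOn γ (Set.Icc 0 1) ∧ γ 0 = c i ∧ γ 1 = c' i ∧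
      ∀ u ∈ Set.Icc (0 : ℝ) 1, cell (γ u) ⊆ D ∧
        ∀ j : Fin n, j ≠ i → interior (cell (γ u)) ∩ cell (c j) = ∅

/-! ### Reachability -/

theorem gridReach_symm {C : Set (ℤ × ℤ)} {p q : ℤ × ℤ} (h : gridReach C p q) :
    gridReach C q p := by
  unfold gridReach at *
  induction h with
  | refl => exact Relation.ReflTransGen.refl
  | @tail a b _ hs ih =>
  obtain ⟨ha, hb, hab⟩ := hs
  refine Relation.ReflTransGen.head ?_ ih
  refine ⟨hb, ha, ?_⟩
  rw [abs_sub_comm b.1, abs_sub_comm b.2]; exact hab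

theorem gridReach_trans {C : Set (ℤ × ℤ)} {p q r : ℤ × ℤ} (h : gridReach C p q)
    (h' : gridReach C q r) : gridReach C p r :=
  Relation.ReflTransGen.trans h h'

/-! ### Forward direction -/

/-- The integer cell at `p` overlaps the square at `x` in its interior. -/
def Near (p : ℤ × ℤ) (x : ℝ × ℝ) : Prop := |(p.1 : ℝ) - x.1| < 1 ∧ |(p.2 : ℝ) - x.2| < 1

theorem near_floor (x : ℝ × ℝ) : Near (⌊x.1⌋, ⌊x.2⌋) x := by
  constructor <;> rw [abs_lt] <;> constructor <;> simp only
  · linarith [Int.lt_floor_add_one x.1]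
  · linarith [Int.floor_le x.1]
  · linarith [Int.lt_floor_add_one x.2]
  · linarith [Int.floor_le x.2]

theorem int_eq_of_mid {c p : ℤ} {y : ℝ} (h1 : (c : ℝ) ≤ y) (h2 : y ≤ c + 1)
    (h3 : (p : ℝ) < y) (h4 : y < p + 1) : c = p := by
  have a : (c : ℝ) < ((p + 1 : ℤ) : ℝ) := by push_cast; linarith
  have b : (p : ℝ) < ((c + 1 : ℤ) : ℝ) := by push_cast; linarith
  have a' : c < p + 1 := by exact_mod_cast a
  have b' : p < c + 1 := by exact_mod_cast b
  omega

theorem near_mem {C : Finset (ℤ × ℤ)} {x : ℝ × ℝ} (hx : cell x ⊆ ⋃ c ∈ C, cell (toR2 c))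
    {p : ℤ × ℤ} (hp : Near p x) : p ∈ C := by
  obtain ⟨h1, h2⟩ := hp
  rw [abs_lt] at h1 h2
  have hy : (((x.1 + p.1 + 1) / 2, (x.2 + p.2 + 1) / 2) : ℝ × ℝ) ∈ cell x := by
    simp only [cell, Set.mem_prod, Set.mem_Icc]
    refine ⟨⟨?_, ?_⟩, ?_, ?_⟩ <;> linarith
  have := hx hy
  simp only [Set.mem_iUnion] at this
  obtain ⟨c, hc, hyc⟩ := this
  simp only [cell, toR2, Set.mem_prod, Set.mem_Icc] at hyc
  obtain ⟨⟨a1, a2⟩, a3, a4⟩ := hyc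
  have e1 : c.1 = p.1 := int_eq_of_mid a1 a2 (by linarith) (by linarith)
  have e2 : c.2 = p.2 := int_eq_of_mid a3 a4 (by linarith) (by linarith)
  have : c = p := Prod.ext e1 e2
  exact this ▸ hc

theorem int_close {p q : ℤ} {x : ℝ} (h : |(p : ℝ) - x| < 1) (h' : |(q : ℝ) - x| < 1) :
    p = q ∨ |p - q| = 1 := by
  rw [abs_lt] at h h'
  have a : ((p - q : ℤ) : ℝ) < (2 : ℤ) := by push_cast; linarith
  have b : ((-2 : ℤ) : ℝ) < ((p - q : ℤ) : ℝ) := by push_cast; linarith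
  have a' : p - q < 2 := by exact_mod_cast a
  have b' : -2 < p - q := by exact_mod_cast b
  rcases abs_cases (p - q) with ⟨h1, h2⟩ | ⟨h1, h2⟩ <;> omega

theorem near_reach {C : Finset (ℤ × ℤ)} {x : ℝ × ℝ} (hx : cell x ⊆ ⋃ c ∈ C, cell (toR2 c))
    {p q : ℤ × ℤ} (hp : Near p x) (hq : Near q x) : gridReach (↑C) p q := by
  have hm : Near (q.1, p.2) x := ⟨hq.1, hp.2⟩
  have hpC := near_mem hx hp
  have hqC := near_mem hx hq
  have hmC := near_mem hx hm
  have s1 : gridReach (↑C) p (q.1, p.2) := by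
    rcases int_close hp.1 hq.1 with h | h
    · rw [← h]; exact Relation.ReflTransGen.refl
    · exact Relation.ReflTransGen.single ⟨hpC, hmC, by simpa using h⟩
  have s2 : gridReach (↑C) (q.1, p.2) q := by
    rcases int_close hp.2 hq.2 with h | h
    · rw [h]; exact Relation.ReflTransGen.refl
    · exact Relation.ReflTransGen.single ⟨hmC, hqC, by simpa using h⟩
  exact gridReach_trans s1 s2

theorem path_reach {C : Finset (ℤ × ℤ)} {γ : ℝ → ℝ × ℝ} (hγ : ContinuousOn γ (Set.Icc 0 1))
    (hD : ∀ u ∈ Set.Icc (0 : ℝ) 1, cell (γ u) ⊆ ⋃ c ∈ C, cell (toR2 c))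
    {p q : ℤ × ℤ} (hp : Near p (γ 0)) (hq : Near q (γ 1)) : gridReach (↑C) p q := by
  have key : ∀ u : Set.Icc (0 : ℝ) 1, ∃ r : ℤ × ℤ, Near r (γ u) ∧
      ∀ᶠ v : Set.Icc (0 : ℝ) 1 in nhds u, Near r (γ v) := by
    intro u
    refine ⟨_, near_floor (γ u), ?_⟩
    have hc : Continuous (fun v : Set.Icc (0 : ℝ) 1 => γ v) := hγ.domRestrict
    have hn := near_floor (γ u)
    refine Filter.Eventually.and ?_ ?_
    · exact ContinuousAt.eventually_lt
        (continuous_const.sub (continuous_fst.comp hc)).abs.continuousAt continuousAt_const hn.1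
    · exact ContinuousAt.eventually_lt
        (continuous_const.sub (continuous_snd.comp hc)).abs.continuousAt continuousAt_const hn.2
  let P : Set.Icc (0 : ℝ) 1 → Prop := fun u => ∃ r, Near r (γ u) ∧ gridReach (↑C) p r
  have hloc : IsLocallyConstant P := by
    rw [IsLocallyConstant.iff_eventually_eq]
    intro u
    obtain ⟨r, hr, hev⟩ := key u
    filter_upwards [hev] with v hv
    apply propext
    constructor
    · rintro ⟨s, hs, hps⟩
      exact ⟨r, hr, gridReach_trans hps (near_reach (hD v v.2) hs hv)⟩
    · rintro ⟨s, hs, hps⟩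
      exact ⟨r, hv, gridReach_trans hps (near_reach (hD u u.2) hs hr)⟩
  have h01 : P ⟨0, by simp⟩ = P ⟨1, by simp⟩ := hloc.apply_eq_of_preconnectedSpace _ _
  have h0 : P ⟨0, by simp⟩ := ⟨p, hp, Relation.ReflTransGen.refl⟩
  rw [h01] at h0
  obtain ⟨r, hr, hpr⟩ := h0
  exact gridReach_trans hpr (near_reach (hD 1 (by simp)) hr hq)

theorem near_toR2 {p q : ℤ × ℤ} (h : Near p (toR2 q)) : p = q := by
  obtain ⟨h1, h2⟩ := h
  simp only [toR2] at h1 h2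
  have a : |p.1 - q.1| < 1 := by exact_mod_cast h1
  have b : |p.2 - q.2| < 1 := by exact_mod_cast h2
  rw [Int.abs_lt_one_iff] at a b
  exact Prod.ext (by omega) (by omega)

theorem near_toR2_self (p : ℤ × ℤ) : Near p (toR2 p) := by
  simp [Near, toR2]

theorem toR2_injective : Function.Injective toR2 := by
  intro p q h
  exact near_toR2 (h ▸ near_toR2_self p)

theorem schedule_reach {C : Finset (ℤ × ℤ)} {n : ℕ} {e : Fin n → ℤ × ℤ} {c : Fin n → ℝ × ℝ}
    (h : Relation.ReflTransGen (Move n (⋃ c ∈ C, cell (toR2 c))) (fun i => toR2 (e i)) c)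
    (i : Fin n) : ∀ q, Near q (c i) → gridReach (↑C) (e i) q := by
  induction h with
  | refl =>
    intro q hq
    rw [near_toR2 hq]; exact Relation.ReflTransGen.refl
  | @tail b c' _ hm ih =>
    obtain ⟨k, hk, γ, hγ, h0, h1, hD⟩ := hm
    intro q hq
    by_cases hik : i = k
    · subst hik
      have hf := near_floor (b i)
      refine gridReach_trans (ih _ hf) (path_reach hγ (fun u hu => (hD u hu).1) ?_ ?_)
      · rw [h0]; exact hf
      · rw [h1]; exact hq
    · rw [hk i hik] at hq
      exact ih q hq

theorem ncard_component {n : ℕ} {S : Finset (ℤ × ℤ)} {e : Fin n → ℤ × ℤ}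
    (he : Function.Injective e) (hS : ∀ v, v ∈ S ↔ ∃ i, e i = v) (Q : ℤ × ℤ → Prop) :
    {q | q ∈ S ∧ Q q}.ncard = {i | Q (e i)}.ncard := by
  rw [← Set.ncard_image_of_injective _ he]
  congr 1
  ext q
  simp only [Set.mem_ofPred_eq, Set.mem_image, hS]
  constructor
  · rintro ⟨⟨i, rfl⟩, h⟩; exact ⟨i, h, rfl⟩
  · rintro ⟨i, h, rfl⟩; exact ⟨⟨i, rfl⟩, h⟩

/-! ### Backward direction -/

/-- Cells are swept along a unit step inside the two end cells, avoiding all other grid cells. -/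
theorem step_geom {a b : ℤ × ℤ} (hab : |a.1 - b.1| + |a.2 - b.2| = 1) {u : ℝ}
    (hu : u ∈ Set.Icc (0 : ℝ) 1) :
    cell (((1 - u) * a.1 + u * b.1, (1 - u) * a.2 + u * b.2) : ℝ × ℝ)
      ⊆ cell (toR2 a) ∪ cell (toR2 b) ∧
    ∀ q : ℤ × ℤ, q ≠ a → q ≠ b →
      interior (cell (((1 - u) * a.1 + u * b.1, (1 - u) * a.2 + u * b.2) : ℝ × ℝ))
        ∩ cell (toR2 q) = ∅ := by
  obtain ⟨a1, a2⟩ := a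
  obtain ⟨b1, b2⟩ := b
  obtain ⟨hu0, hu1⟩ := hu
  have hcases : (b1 = a1 + 1 ∧ b2 = a2) ∨ (b1 = a1 - 1 ∧ b2 = a2) ∨ (b1 = a1 ∧ b2 = a2 + 1) ∨
      (b1 = a1 ∧ b2 = a2 - 1) := by
    simp only at hab
    rcases abs_cases (a1 - b1) with ⟨h1, h2⟩ | ⟨h1, h2⟩ <;>
    rcases abs_cases (a2 - b2) with ⟨h3, h4⟩ | ⟨h3, h4⟩ <;> omega
  constructor
  · rintro ⟨y1, y2⟩ hy
    simp only [cell, toR2, Set.mem_prod, Set.mem_Icc, Set.mem_union] at hy ⊢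
    obtain ⟨⟨h1, h2⟩, h3, h4⟩ := hy
    rcases hcases with ⟨rfl, rfl⟩ | ⟨rfl, rfl⟩ | ⟨rfl, rfl⟩ | ⟨rfl, rfl⟩ <;>
      push_cast at h1 h2 h3 h4 ⊢
    · rcases le_total y1 (a1 + 1) with h | h
      · left; refine ⟨⟨?_, ?_⟩, ?_, ?_⟩ <;> linarith
      · right; refine ⟨⟨?_, ?_⟩, ?_, ?_⟩ <;> linarith
    · rcases le_total y1 a1 with h | h
      · right; refine ⟨⟨?_, ?_⟩, ?_, ?_⟩ <;> linarith
      · left; refine ⟨⟨?_, ?_⟩, ?_, ?_⟩ <;> linarith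
    · rcases le_total y2 (a2 + 1) with h | h
      · left; refine ⟨⟨?_, ?_⟩, ?_, ?_⟩ <;> linarith
      · right; refine ⟨⟨?_, ?_⟩, ?_, ?_⟩ <;> linarith
    · rcases le_total y2 a2 with h | h
      · right; refine ⟨⟨?_, ?_⟩, ?_, ?_⟩ <;> linarith
      · left; refine ⟨⟨?_, ?_⟩, ?_, ?_⟩ <;> linarith
  · rintro ⟨q1, q2⟩ hqa hqb
    rw [Set.eq_empty_iff_forall_notMem]
    rintro ⟨y1, y2⟩ ⟨hy, hyq⟩
    rw [cell, interior_prod_eq, interior_Icc, interior_Icc] at hy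
    simp only [cell, toR2, Set.mem_prod, Set.mem_Icc, Set.mem_Ioo] at hy hyq
    obtain ⟨⟨h1, h2⟩, h3, h4⟩ := hy
    obtain ⟨⟨g1, g2⟩, g3, g4⟩ := hyq
    simp only [ne_eq, Prod.mk.injEq, not_and] at hqa hqb
    rcases hcases with ⟨rfl, rfl⟩ | ⟨rfl, rfl⟩ | ⟨rfl, rfl⟩ | ⟨rfl, rfl⟩ <;>
      push_cast at h1 h2 h3 h4
    · have e : q2 = b2 := int_eq_of_mid g3 g4 (by linarith) (by linarith)
      have l : (a1 : ℝ) < ((q1 + 1 : ℤ) : ℝ) := by push_cast; linarith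
      have r : (q1 : ℝ) < ((a1 + 2 : ℤ) : ℝ) := by push_cast; linarith
      have l' : a1 < q1 + 1 := by exact_mod_cast l
      have r' : q1 < a1 + 2 := by exact_mod_cast r
      have : q1 = a1 ∨ q1 = a1 + 1 := by omega
      tauto
    · have e : q2 = b2 := int_eq_of_mid g3 g4 (by linarith) (by linarith)
      have l : ((a1 - 1 : ℤ) : ℝ) < ((q1 + 1 : ℤ) : ℝ) := by push_cast; linarith
      have r : (q1 : ℝ) < ((a1 + 1 : ℤ) : ℝ) := by push_cast; linarith
      have l' : a1 - 1 < q1 + 1 := by exact_mod_cast l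
      have r' : q1 < a1 + 1 := by exact_mod_cast r
      have : q1 = a1 ∨ q1 = a1 - 1 := by omega
      tauto
    · have e : q1 = b1 := int_eq_of_mid g1 g2 (by linarith) (by linarith)
      have l : (a2 : ℝ) < ((q2 + 1 : ℤ) : ℝ) := by push_cast; linarith
      have r : (q2 : ℝ) < ((a2 + 2 : ℤ) : ℝ) := by push_cast; linarith
      have l' : a2 < q2 + 1 := by exact_mod_cast l
      have r' : q2 < a2 + 2 := by exact_mod_cast r
      have : q2 = a2 ∨ q2 = a2 + 1 := by omega
      tauto
    · have e : q1 = b1 := int_eq_of_mid g1 g2 (by linarith) (by linarith)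
      have l : ((a2 - 1 : ℤ) : ℝ) < ((q2 + 1 : ℤ) : ℝ) := by push_cast; linarith
      have r : (q2 : ℝ) < ((a2 + 1 : ℤ) : ℝ) := by push_cast; linarith
      have l' : a2 - 1 < q2 + 1 := by exact_mod_cast l
      have r' : q2 < a2 + 1 := by exact_mod_cast r
      have : q2 = a2 ∨ q2 = a2 - 1 := by omega
      tauto

/-- One unlabeled token slides along an edge of the grid graph on `C`. -/
def TokenStep (C : Finset (ℤ × ℤ)) (S S' : Finset (ℤ × ℤ)) : Prop :=
  ∃ a b, a ∈ S ∧ b ∉ S ∧ a ∈ C ∧ b ∈ C ∧ |a.1 - b.1| + |a.2 - b.2| = 1 ∧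
    S' = insert b (S.erase a)

theorem tokenStep_lift {C : Finset (ℤ × ℤ)} {n : ℕ} {S S' : Finset (ℤ × ℤ)}
    (h : TokenStep C S S') (e : Fin n → ℤ × ℤ) (he : Function.Injective e)
    (hS : ∀ v, v ∈ S ↔ ∃ i, e i = v) :
    ∃ e' : Fin n → ℤ × ℤ, Function.Injective e' ∧ (∀ v, v ∈ S' ↔ ∃ i, e' i = v) ∧
      Move n (⋃ c ∈ C, cell (toR2 c)) (fun i => toR2 (e i)) (fun i => toR2 (e' i)) := by
  obtain ⟨a, b, haS, hbS, haC, hbC, hab, rfl⟩ := h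
  obtain ⟨i, rfl⟩ := (hS a).1 haS
  have hb : ∀ j, e j ≠ b := fun j hj => hbS ((hS b).2 ⟨j, hj⟩)
  refine ⟨Function.update e i b, ?_, ?_, i, ?_,
    fun u => ((1 - u) * (e i).1 + u * b.1, (1 - u) * (e i).2 + u * b.2), ?_, ?_, ?_, ?_⟩
  · intro j k hjk
    by_cases hj : j = i <;> by_cases hk : k = i
    · rw [hj, hk]
    · subst hj
      rw [Function.update_self, Function.update_of_ne hk] at hjk
      exact absurd hjk.symm (hb k)
    · subst hk
      rw [Function.update_self, Function.update_of_ne hj] at hjk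
      exact absurd hjk (hb j)
    · rw [Function.update_of_ne hk, Function.update_of_ne hj] at hjk
      exact he hjk
  · intro v
    rw [Finset.mem_insert, Finset.mem_erase, hS]
    constructor
    · rintro (rfl | ⟨hv, j, rfl⟩)
      · exact ⟨i, by simp⟩
      · refine ⟨j, Function.update_of_ne ?_ _ _⟩
        rintro rfl; exact hv rfl
    · rintro ⟨j, rfl⟩
      by_cases hj : j = i
      · left; rw [hj]; simp
      · right
        rw [Function.update_of_ne hj]
        exact ⟨fun h => hj (he h), j, rfl⟩
  · intro j hj
    simp [Function.update_of_ne hj]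
  · fun_prop
  · simp [toR2]
  · simp [toR2]
  · intro u hu
    obtain ⟨h1, h2⟩ := step_geom hab hu
    refine ⟨h1.trans (Set.union_subset ?_ ?_), ?_⟩
    · exact Set.subset_biUnion_of_mem (u := fun c => cell (toR2 c)) haC
    · exact Set.subset_biUnion_of_mem (u := fun c => cell (toR2 c)) hbC
    · intro j hj
      exact h2 (e j) (fun h => hj (he h)) (hb j)

theorem token_schedule_lift {C : Finset (ℤ × ℤ)} {n : ℕ} {S S' : Finset (ℤ × ℤ)}
    (h : Relation.ReflTransGen (TokenStep C) S S') (e : Fin n → ℤ × ℤ)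
    (he : Function.Injective e) (hS : ∀ v, v ∈ S ↔ ∃ i, e i = v) :
    ∃ e' : Fin n → ℤ × ℤ, Function.Injective e' ∧ (∀ v, v ∈ S' ↔ ∃ i, e' i = v) ∧
      Relation.ReflTransGen (Move n (⋃ c ∈ C, cell (toR2 c)))
        (fun i => toR2 (e i)) (fun i => toR2 (e' i)) := by
  induction h with
  | refl => exact ⟨e, he, hS, Relation.ReflTransGen.refl⟩
  | tail _ hs ih =>
    obtain ⟨e₁, he₁, hS₁, hr⟩ := ih
    obtain ⟨e₂, he₂, hS₂, hm⟩ := tokenStep_lift hs e₁ he₁ hS₁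
    exact ⟨e₂, he₂, hS₂, hr.tail hm⟩

/-- A token can effectively be transported along any path to an empty vertex. -/
theorem token_transport {C : Finset (ℤ × ℤ)} {p q : ℤ × ℤ} (h : gridReach (↑C) p q) :
    ∀ S : Finset (ℤ × ℤ), p ∈ S → q ∉ S →
      Relation.ReflTransGen (TokenStep C) S (insert q (S.erase p)) := by
  unfold gridReach at h
  induction h using Relation.ReflTransGen.head_induction_on with
  | refl => intro S hp hq; exact absurd hp hq
  | @head p p' hstep _ ih =>
    obtain ⟨hpC, hpC', hadj⟩ := hstep
    have hpp : p ≠ p' := by rintro rfl; simp at hadj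
    intro S hp hq
    have hpq : p ≠ q := by rintro rfl; exact hq hp
    by_cases hp' : p' ∈ S
    · have h1 := ih S hp' hq
      have hpq' : p' ≠ q := by rintro rfl; exact hq hp'
      refine h1.tail ⟨p, p', ?_, ?_, hpC, hpC', hadj, ?_⟩
      · simp [hpp, hp]
      · simp [hpq']
      · ext v
        simp only [Finset.mem_insert, Finset.mem_erase]
        by_cases h1 : v = p <;> by_cases h2 : v = p' <;> by_cases h3 : v = q <;> simp_all
    · have hs : TokenStep C S (insert p' (S.erase p)) :=
        ⟨p, p', hp, hp', hpC, hpC', hadj, rfl⟩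
      by_cases hpq' : p' = q
      · subst hpq'
        exact Relation.ReflTransGen.single hs
      · have h1 := ih (insert p' (S.erase p)) (by simp) (by simp [Ne.symm hpq', hq])
        refine Relation.ReflTransGen.head hs ?_
        convert h1 using 2
        rw [Finset.erase_insert]
        simp [hp']

open Classical in
theorem token_reconfigure {C : Finset (ℤ × ℤ)} (T : Finset (ℤ × ℤ)) (hTC : T ⊆ C) :
    ∀ (k : ℕ) (S : Finset (ℤ × ℤ)), S ⊆ C → S.card = T.card → (S \ T).card = k →
      (∀ p ∈ C, (S.filter (gridReach (↑C) p)).card = (T.filter (gridReach (↑C) p)).card) →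
      Relation.ReflTransGen (TokenStep C) S T := by
  intro k
  induction k with
  | zero =>
    intro S _ hc hk _
    rw [Finset.card_eq_zero, Finset.sdiff_eq_empty_iff_subset] at hk
    rw [Finset.eq_of_subset_of_card_le hk hc.ge]
  | succ k ih =>
    intro S hSC hc hk hcomp
    obtain ⟨p, hp⟩ : (S \ T).Nonempty := by rw [← Finset.card_pos]; omega
    rw [Finset.mem_sdiff] at hp
    obtain ⟨hpS, hpT⟩ := hp
    obtain ⟨q, hqT, hqS, hpq⟩ : ∃ q ∈ T, q ∉ S ∧ gridReach (↑C) p q := by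
      by_contra hcon
      push Not at hcon
      have hsub : T.filter (gridReach (↑C) p) ⊆ S.filter (gridReach (↑C) p) := by
        intro v hv
        rw [Finset.mem_filter] at hv ⊢
        refine ⟨?_, hv.2⟩
        by_contra hvS
        exact hcon v hv.1 hvS hv.2
      have heq := Finset.eq_of_subset_of_card_le hsub (hcomp p (hSC hpS)).le
      have : p ∈ T.filter (gridReach (↑C) p) := by
        rw [heq, Finset.mem_filter]
        exact ⟨hpS, Relation.ReflTransGen.refl⟩
      exact hpT (Finset.mem_filter.1 this).1
    have hqe : q ∉ S.erase p := fun h => hqS (Finset.mem_of_mem_erase h)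
    refine (token_transport hpq S hpS hqS).trans (ih _ ?_ ?_ ?_ ?_)
    · exact Finset.insert_subset (hTC hqT) ((Finset.erase_subset _ _).trans hSC)
    · rw [Finset.card_insert_of_notMem hqe, Finset.card_erase_add_one hpS, hc]
    · have : insert q (S.erase p) \ T = (S \ T).erase p := by
        ext v
        simp only [Finset.mem_sdiff, Finset.mem_insert, Finset.mem_erase]
        by_cases h1 : v = q
        · subst h1; simp [hqT]
        · simp [h1, and_assoc]
      rw [this, Finset.card_erase_of_mem (by simp [hpS, hpT]), hk]
      rfl
    · intro r hr
      rw [← hcomp r hr, Finset.filter_insert, Finset.filter_erase]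
      by_cases hrq : gridReach (↑C) r q
      · have hrp : gridReach (↑C) r p := gridReach_trans hrq (gridReach_symm hpq)
        rw [if_pos hrq, Finset.card_insert_of_notMem (by simp [hqS]),
          Finset.card_erase_add_one (by simp [hpS, hrp])]
      · have hrp : ¬ gridReach (↑C) r p := fun h => hrq (gridReach_trans h hpq)
        rw [if_neg hrq, Finset.erase_eq_of_notMem (by simp [hrp])]

/-- Decision characterization for bounded, unlabeled, unit-size squares: the `n` unit
squares starting on the cells of `S ⊆ C` can be reconfigured, by a finite sequence of
valid moves inside `D = ⋃_{c ∈ C} cell c`, into a configuration occupying exactly the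
cells of `T ⊆ C`, if and only if `S` and `T` have the same number of points in every
connected component of the grid graph on `C`. -/
theorem unlabeled_unit_square_reconfiguration_iff
    (C : Finset (ℤ × ℤ)) (D : Set (ℝ × ℝ)) (hD : D = ⋃ c ∈ C, cell (toR2 c))
    (S T : Finset (ℤ × ℤ)) (hSC : S ⊆ C) (hTC : T ⊆ C)
    (n : ℕ) (hS : S.card = n) (hT : T.card = n) :
    (∃ (e : Fin n → ℤ × ℤ) (final : Fin n → ℝ × ℝ),
        Function.Injective e ∧ (∀ v : ℤ × ℤ, v ∈ S ↔ ∃ i : Fin n, e i = v) ∧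
        Relation.ReflTransGen (Move n D) (fun i => toR2 (e i)) final ∧
        (∀ v : ℤ × ℤ, v ∈ T ↔ ∃ i : Fin n, final i = toR2 v)) ↔
      (∀ p ∈ C, {q : ℤ × ℤ | q ∈ S ∧ gridReach (↑C) p q}.ncard
        = {q : ℤ × ℤ | q ∈ T ∧ gridReach (↑C) p q}.ncard) := by
  subst hD
  constructor
  · rintro ⟨e, final, he, hSe, hrun, hfin⟩ p _
    -- every final position is a grid point of `T`
    have hch : ∀ v : T, ∃ i : Fin n, final i = toR2 v := fun v => (hfin v).1 v.2
    choose g hg using hch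
    have hginj : Function.Injective g := by
      intro v w hvw
      have : toR2 v = toR2 w := by rw [← hg v, ← hg w, hvw]
      exact Subtype.ext (toR2_injective this)
    have hgbij : Function.Bijective g := by
      rw [Fintype.bijective_iff_injective_and_card]
      exact ⟨hginj, by simp [hT]⟩
    have hf : ∀ i, ∃ v : ℤ × ℤ, v ∈ T ∧ final i = toR2 v ∧ ∀ h : v ∈ T, g ⟨v, h⟩ = i := by
      intro i
      obtain ⟨v, rfl⟩ := hgbij.2 i
      exact ⟨v, v.2, hg v, fun _ => rfl⟩
    choose f hfT hff hgf using hf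
    have hfinj : Function.Injective f := by
      intro i j hij
      have h1 := hgf i (hfT i)
      have h2 := hgf j (hfT j)
      rw [← h1, ← h2]
      congr 1
      exact Subtype.ext hij
    have hTf : ∀ v, v ∈ T ↔ ∃ i, f i = v := by
      intro v
      rw [hfin]
      refine exists_congr fun i => ?_
      rw [hff i]
      exact toR2_injective.eq_iff
    rw [ncard_component he hSe, ncard_component hfinj hTf]
    congr 1
    ext i
    have hr : gridReach (↑C) (e i) (f i) :=
      schedule_reach hrun i _ (by rw [hff i]; exact near_toR2_self _)
    exact ⟨fun h => gridReach_trans h hr, fun h => gridReach_trans h (gridReach_symm hr)⟩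
  · intro h
    classical
    have hcomp : ∀ p ∈ C, (S.filter (gridReach (↑C) p)).card
        = (T.filter (gridReach (↑C) p)).card := by
      intro p hp
      have := h p hp
      rw [← Set.ncard_coe_finset, ← Set.ncard_coe_finset, Finset.coe_filter, Finset.coe_filter]
      exact this
    have hrun := token_reconfigure T hTC _ S hSC (hS.trans hT.symm) rfl (by convert hcomp)
    let φ : Fin n ≃ S := (S.equivFinOfCardEq hS).symm
    obtain ⟨e', he', hT', hm⟩ := token_schedule_lift hrun (fun i => (φ i : ℤ × ℤ))
      (Subtype.val_injective.comp φ.injective) (by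
        intro v
        constructor
        · intro hv; exact ⟨φ.symm ⟨v, hv⟩, by simp⟩
        · rintro ⟨i, rfl⟩; exact (φ i).2)
    refine ⟨fun i => (φ i : ℤ × ℤ), fun i => toR2 (e' i),
      Subtype.val_injective.comp φ.injective, ?_, hm, ?_⟩
    · intro v
      constructor
      · intro hv; exact ⟨φ.symm ⟨v, hv⟩, by simp⟩
      · rintro ⟨i, rfl⟩; exact (φ i).2
    · intro v
      rw [hT']
      exact exists_congr fun i => toR2_injective.eq_iff.symm
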